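/- Fix real α, β > −1, j ∈ ℕ with j ≥ 1, γ ∈ ℝ, M > 0, and a sequence M_n ≥ 0 with lim_{n→∞} M_n n^γ = M. If γ > 2(α+2j+1), then there exists N such that for all n ≥ N every real zero of Q_n lies in the open interval (−1, 1). -/

import Mathlib

open Polynomial Filter

/-- The Jacobi polynomial `P_n^{(α,β)}` as a real polynomial. -/
noncomputable def jacobiP (α β : ℝ) (n : ℕ) : Polynomial ℝ :=
  ∑ k ∈ Finset.range (n + 1),
    Polynomial.C (Real.Gamma (n + α + 1) / (Real.Gamma ((n : ℝ) - k + 1) * Real.Gamma (α + k + 1)) *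
        (Real.Gamma (n + β + 1) / (Real.Gamma ((k : ℝ) + 1) * Real.Gamma ((n : ℝ) - k + β + 1)))) *
      (Polynomial.C (2⁻¹ : ℝ) * (Polynomial.X - 1)) ^ k *
      (Polynomial.C (2⁻¹ : ℝ) * (Polynomial.X + 1)) ^ (n - k)

/-- The squared Jacobi norm `‖P_n^{(α,β)}‖²`. -/
noncomputable def jacobiNormSq (α β : ℝ) (n : ℕ) : ℝ :=
  ∫ x in (-1 : ℝ)..1, (jacobiP α β n).eval x ^ 2 * (1 - x) ^ α * (1 + x) ^ β

/-- The kernel `K_n^{(j,k)}(x,y)`. -/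
noncomputable def kernK (α β : ℝ) (j k n : ℕ) (x y : ℝ) : ℝ :=
  ∑ i ∈ Finset.range (n + 1),
    (Polynomial.derivative^[j] (jacobiP α β i)).eval x *
      (Polynomial.derivative^[k] (jacobiP α β i)).eval y / jacobiNormSq α β i

/-- The kernel `K_n^{(j,0)}(1,·)` as a polynomial. -/
noncomputable def kernKPoly (α β : ℝ) (j n : ℕ) : Polynomial ℝ :=
  ∑ i ∈ Finset.range (n + 1),
    Polynomial.C ((Polynomial.derivative^[j] (jacobiP α β i)).eval 1 / jacobiNormSq α β i) *
      jacobiP α β i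

/-- The varying Sobolev inner product `(f,g)_{S,n}` with mass `m`. -/
noncomputable def sobInner (α β : ℝ) (j : ℕ) (m : ℝ) (f g : Polynomial ℝ) : ℝ :=
  (∫ x in (-1 : ℝ)..1, f.eval x * g.eval x * (1 - x) ^ α * (1 + x) ^ β) +
    m * (Polynomial.derivative^[j] f).eval 1 * (Polynomial.derivative^[j] g).eval 1

/-- The Jacobi–Sobolev orthogonal polynomial `Q_n`. -/
noncomputable def sobQ (α β : ℝ) (j : ℕ) (Ms : ℕ → ℝ) (n : ℕ) : Polynomial ℝ :=
  jacobiP α β n -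
    Polynomial.C (Ms n * (Polynomial.derivative^[j] (jacobiP α β n)).eval 1 /
        (1 + Ms n * kernK α β j j (n - 1) 1 1)) *
      kernKPoly α β j (n - 1)


theorem asc_prod (x : ℝ) (m : ℕ) :
    ∏ j ∈ Finset.range m, (x + (j : ℝ)) = (ascPochhammer ℝ m).eval x := by
  induction m with
  | zero => simp
  | succ m ih => rw [ascPochhammer_succ_eval, Finset.prod_range_succ, ih]

theorem gamma_add_nat (x : ℝ) (hx : 0 < x) (m : ℕ) :
    Real.Gamma (x + m) = (ascPochhammer ℝ m).eval x * Real.Gamma x := by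
  induction m with
  | zero => simp
  | succ m ih =>
    rw [ascPochhammer_succ_eval, Nat.cast_succ, ← add_assoc, Real.Gamma_add_one (by positivity), ih]
    ring

theorem pos_seq_bounds (u : ℕ → ℝ) (hu : ∀ n, 0 < u n) (l : ℝ) (hl : 0 < l)
    (h : Tendsto u atTop (nhds l)) : ∃ c C : ℝ, 0 < c ∧ 0 < C ∧ ∀ n, c ≤ u n ∧ u n ≤ C := by
  obtain ⟨C, hC⟩ := h.bddAbove_range
  obtain ⟨D, hD⟩ := (h.inv₀ hl.ne').bddAbove_range
  have hC' : ∀ n, u n ≤ C := fun n => hC ⟨n, rfl⟩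
  have hD' : ∀ n, (u n)⁻¹ ≤ D := fun n => hD ⟨n, rfl⟩
  have hDp : 0 < D := lt_of_lt_of_le (inv_pos.2 (hu 0)) (hD' 0)
  refine ⟨D⁻¹, C, inv_pos.2 hDp, lt_of_lt_of_le (hu 0) (hC' 0), fun n => ⟨?_, hC' n⟩⟩
  exact inv_le_of_inv_le₀ (hu n) (hD' n)

theorem gamma_bounds (a : ℝ) (ha : -1 < a) : ∃ c C : ℝ, 0 < c ∧ 0 < C ∧ ∀ n : ℕ,
    c * (((n : ℝ) + 1) ^ a * n.factorial) ≤ Real.Gamma (n + a + 1) ∧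
    Real.Gamma (n + a + 1) ≤ C * (((n : ℝ) + 1) ^ a * n.factorial) := by
  have hG : 0 < Real.Gamma (a + 1) := Real.Gamma_pos_of_pos (by linarith)
  have hGn : ∀ n : ℕ, 0 < Real.Gamma (n + a + 1) := fun n =>
    Real.Gamma_pos_of_pos (by have : (0 : ℝ) ≤ n := n.cast_nonneg; linarith)
  have key : ∀ n : ℕ, (Real.Gamma (n + a + 1) / (((n : ℝ) + 1) ^ a * n.factorial))⁻¹ =
      Real.GammaSeq (a + 1) (n + 1) / Real.Gamma (a + 1) *
        ((1 + a * (1 / ((n : ℝ) + 1))) * (1 + (a + 1) * (1 / ((n : ℝ) + 1)))) := by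
    intro n
    have h0 : (0 : ℝ) ≤ n := n.cast_nonneg
    have hp : ∏ j ∈ Finset.range (n + 1 + 1), (a + 1 + (j : ℝ)) =
        (ascPochhammer ℝ (n + 2)).eval (a + 1) := by
      exact asc_prod _ _
    have h1 := gamma_add_nat (a + 1) (by linarith) (n + 2)
    have h2 : Real.Gamma (a + 1 + ((n + 2 : ℕ) : ℝ)) =
        (n + a + 2) * ((n + a + 1) * Real.Gamma (n + a + 1)) := by
      have e1 : (a + 1 + ((n + 2 : ℕ) : ℝ)) = ((n + a + 1) + 1) + 1 := by push_cast; ring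
      rw [e1, Real.Gamma_add_one (by linarith), Real.Gamma_add_one (by linarith)]
      ring
    have hP : (ascPochhammer ℝ (n + 2)).eval (a + 1) ≠ 0 :=
      (ascPochhammer_pos _ _ (by linarith)).ne'
    rw [Real.GammaSeq, hp]
    have h3 : (((n + 1 : ℕ) : ℝ)) ^ (a + 1) = ((n : ℝ) + 1) ^ a * (n + 1) := by
      push_cast
      rw [Real.rpow_add_one (by positivity)]
    rw [h3, Nat.factorial_succ]
    have h4 : (ascPochhammer ℝ (n + 2)).eval (a + 1) =
      (n + a + 2) * ((n + a + 1) * Real.Gamma (n + a + 1)) / Real.Gamma (a + 1) := by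
      rw [eq_div_iff hG.ne', ← h1, h2]
    rw [h4]
    have h5 : (n : ℝ) + 1 ≠ 0 := by positivity
    have h6 : (n : ℝ) + a + 2 ≠ 0 := by linarith
    have h7 : (n : ℝ) + a + 1 ≠ 0 := by linarith
    have h8 := (hGn n).ne'
    have h9 : (n.factorial : ℝ) ≠ 0 := by positivity
    have h10 : ((n : ℝ) + 1) ^ a ≠ 0 := by positivity
    push_cast
    field_simp
    ring
  have hone : Tendsto (fun n : ℕ => (1 : ℝ) / ((n : ℝ) + 1)) atTop (nhds 0) :=
    tendsto_one_div_add_atTop_nhds_zero_nat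
  have hlim : Tendsto (fun n : ℕ =>
      (Real.Gamma (n + a + 1) / (((n : ℝ) + 1) ^ a * n.factorial))⁻¹) atTop (nhds 1) := by
    simp_rw [key]
    have h1 : Tendsto (fun n : ℕ => Real.GammaSeq (a + 1) (n + 1)) atTop
      (nhds (Real.Gamma (a + 1))) :=
      (Real.GammaSeq_tendsto_Gamma (a + 1)).comp (tendsto_add_atTop_nat 1)
    have h2 := (h1.div_const (Real.Gamma (a + 1))).mul
      (((hone.const_mul a).const_add 1).mul ((hone.const_mul (a + 1)).const_add 1))
    simpa [hG.ne'] using h2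
  have hlim' := hlim.inv₀ one_ne_zero
  simp only [inv_inv, inv_one] at hlim'
  obtain ⟨c, C, hc, hC, h⟩ := pos_seq_bounds _ (fun n => by
    have := hGn n; positivity) 1 one_pos hlim'
  refine ⟨c, C, hc, hC, fun n => ?_⟩
  have hp : 0 < ((n : ℝ) + 1) ^ a * n.factorial := by positivity
  have := h n
  rwa [le_div_iff₀ hp, div_le_iff₀ hp] at this

/-! ### Beta integrals -/

theorem beta01 (a b : ℝ) (ha : -1 < a) (hb : -1 < b) :
    ∫ t in (0 : ℝ)..1, t ^ a * (1 - t) ^ b =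
      Real.Gamma (a + 1) * Real.Gamma (b + 1) / Real.Gamma (a + b + 2) := by
  have h := ProbabilityTheory.beta_eq_betaIntegralReal (a + 1) (b + 1) (by linarith) (by linarith)
  have h2 : Complex.betaIntegral ((a + 1 : ℝ) : ℂ) ((b + 1 : ℝ) : ℂ) =
      ((∫ t in (0 : ℝ)..1, t ^ a * (1 - t) ^ b : ℝ) : ℂ) := by
    rw [Complex.betaIntegral, ← intervalIntegral.integral_ofReal]
    refine intervalIntegral.integral_congr fun t ht => ?_
    rw [Set.uIcc_of_le zero_le_one] at ht
    have e1 : ((a + 1 : ℝ) : ℂ) - 1 = ((a : ℝ) : ℂ) := by push_cast; ring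
    have e2 : ((b + 1 : ℝ) : ℂ) - 1 = ((b : ℝ) : ℂ) := by push_cast; ring
    have e3 : (1 : ℂ) - (t : ℂ) = ((1 - t : ℝ) : ℂ) := by push_cast; ring
    simp only [e1, e2, e3]
    rw [← Complex.ofReal_cpow ht.1, ← Complex.ofReal_cpow (by linarith [ht.2])]
    push_cast
    rfl
  rw [h2, Complex.ofReal_re, ProbabilityTheory.beta] at h
  rw [← h]
  congr 2
  ring

theorem beta11 (a b : ℝ) (ha : -1 < a) (hb : -1 < b) :
    ∫ x in (-1 : ℝ)..1, (1 - x) ^ a * (1 + x) ^ b =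
      2 ^ (a + b + 1) * (Real.Gamma (a + 1) * Real.Gamma (b + 1) / Real.Gamma (a + b + 2)) := by
  have h := intervalIntegral.integral_comp_sub_mul (a := 0) (b := 1)
    (fun x : ℝ => (1 - x) ^ a * (1 + x) ^ b) (c := 2) two_ne_zero 1
  norm_num at h
  have h2 : ∫ t in (0 : ℝ)..1, (2 * t) ^ a * (1 + (1 - 2 * t)) ^ b =
      2 ^ (a + b) * ∫ t in (0 : ℝ)..1, t ^ a * (1 - t) ^ b := by
    rw [← intervalIntegral.integral_const_mul]
    refine intervalIntegral.integral_congr fun t ht => ?_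
    rw [Set.uIcc_of_le zero_le_one] at ht
    have e : 1 + (1 - 2 * t) = 2 * (1 - t) := by ring
    simp only [e]
    rw [Real.mul_rpow (by norm_num) ht.1, Real.mul_rpow (by norm_num) (by linarith [ht.2]),
      Real.rpow_add (by norm_num)]
    ring
  rw [h2, beta01 a b ha hb] at h
  rw [Real.rpow_add_one (by norm_num)]
  linarith

theorem weight_integrable (a b : ℝ) (ha : -1 < a) (hb : -1 < b) :
    IntervalIntegrable (fun x : ℝ => (1 - x) ^ a * (1 + x) ^ b) MeasureTheory.volume (-1) 1 := by
  by_contra h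
  have h1 := intervalIntegral.integral_undef h
  rw [beta11 a b ha hb] at h1
  have p1 : 0 < Real.Gamma (a + 1) := Real.Gamma_pos_of_pos (by linarith)
  have p2 : 0 < Real.Gamma (b + 1) := Real.Gamma_pos_of_pos (by linarith)
  have p3 : 0 < Real.Gamma (a + b + 2) := Real.Gamma_pos_of_pos (by linarith)
  have : 0 < (2 : ℝ) ^ (a + b + 1) * (Real.Gamma (a + 1) * Real.Gamma (b + 1) / Real.Gamma (a + b + 2)) := by
    positivity
  linarith

theorem poly_weight_integrable (a b : ℝ) (ha : -1 < a) (hb : -1 < b) (q : ℝ[X]) :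
    IntervalIntegrable (fun x : ℝ => q.eval x * ((1 - x) ^ a * (1 + x) ^ b))
      MeasureTheory.volume (-1) 1 :=
  (weight_integrable a b ha hb).continuousOn_mul q.continuous.continuousOn

/-- The Jacobi moment functional. -/
noncomputable def jacL (a b : ℝ) (ha : -1 < a) (hb : -1 < b) : ℝ[X] →ₗ[ℝ] ℝ where
  toFun q := ∫ x in (-1 : ℝ)..1, q.eval x * ((1 - x) ^ a * (1 + x) ^ b)
  map_add' p q := by
    rw [← intervalIntegral.integral_add (poly_weight_integrable a b ha hb p)
      (poly_weight_integrable a b ha hb q)]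
    simp only [eval_add, add_mul]
  map_smul' c q := by
    rw [RingHom.id_apply, smul_eq_mul, ← intervalIntegral.integral_const_mul]
    simp only [eval_smul, smul_eq_mul, mul_assoc]

theorem jacL_basis (a b : ℝ) (ha : -1 < a) (hb : -1 < b) (m l : ℕ) :
    jacL a b ha hb ((1 - X) ^ m * (1 + X) ^ l) = 2 ^ (a + b + 1) * 2 ^ (m + l) *
      (Real.Gamma (a + m + 1) * Real.Gamma (b + l + 1) / Real.Gamma (a + b + m + l + 2)) := by
  have hm : (0 : ℝ) ≤ m := m.cast_nonneg
  have hl : (0 : ℝ) ≤ l := l.cast_nonneg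
  have h := beta11 (a + m) (b + l) (by linarith) (by linarith)
  have e : jacL a b ha hb ((1 - X) ^ m * (1 + X) ^ l) =
      ∫ x in (-1 : ℝ)..1, (1 - x) ^ (a + m) * (1 + x) ^ (b + l) := by
    change ∫ x in (-1 : ℝ)..1, _ = _
    rw [intervalIntegral.integral_of_le (by norm_num), intervalIntegral.integral_of_le (by norm_num),
      MeasureTheory.integral_Ioc_eq_integral_Ioo, MeasureTheory.integral_Ioc_eq_integral_Ioo]
    refine MeasureTheory.setIntegral_congr_fun measurableSet_Ioo fun x hx => ?_
    have h1 : 1 - x ≠ 0 := by linarith [hx.2]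
    have h2 : 1 + x ≠ 0 := by linarith [hx.1]
    simp only [eval_mul, eval_pow, eval_sub, eval_add, eval_one, eval_X]
    rw [Real.rpow_add_natCast h1, Real.rpow_add_natCast h2]
    ring
  rw [e, h]
  have e2 : a + m + (b + l) + 1 = a + b + 1 + ((m + l : ℕ) : ℝ) := by push_cast; ring
  have e3 : a + m + (b + l) + 2 = a + b + m + l + 2 := by ring
  rw [e2, e3, Real.rpow_add_natCast (by norm_num)]

/-- Coefficients of the Jacobi polynomial. -/
noncomputable def jc (α β : ℝ) (n k : ℕ) : ℝ :=
  Real.Gamma (n + α + 1) / (Real.Gamma ((n : ℝ) - k + 1) * Real.Gamma (α + k + 1)) *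
        (Real.Gamma (n + β + 1) / (Real.Gamma ((k : ℝ) + 1) * Real.Gamma ((n : ℝ) - k + β + 1)))

/-- Value at one. -/
noncomputable def jR (α : ℝ) (n : ℕ) : ℝ := Real.Gamma (n + α + 1) / (n.factorial * Real.Gamma (α + 1))

/-- Normalised coefficients. -/
noncomputable def jb (α β : ℝ) (n k : ℕ) : ℝ :=
  n.choose k * (Real.Gamma (α + 1) / Real.Gamma (α + k + 1)) * (descPochhammer ℝ k).eval (n + β)

theorem jacobiP_eq (α β : ℝ) (n : ℕ) : jacobiP α β n = ∑ k ∈ Finset.range (n + 1),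
    C (jc α β n k) * (C (2⁻¹ : ℝ) * (X - 1)) ^ k * (C (2⁻¹ : ℝ) * (X + 1)) ^ (n - k) := rfl

theorem gamma_pos' (a : ℝ) (ha : -1 < a) (n : ℕ) : 0 < Real.Gamma (n + a + 1) :=
  Real.Gamma_pos_of_pos (by have : (0 : ℝ) ≤ n := n.cast_nonneg; linarith)

theorem gamma_pos'' (a : ℝ) (ha : -1 < a) (n : ℕ) : 0 < Real.Gamma (a + n + 1) :=
  Real.Gamma_pos_of_pos (by have : (0 : ℝ) ≤ n := n.cast_nonneg; linarith)

theorem gamma_sub_fac (n k : ℕ) (hk : k ≤ n) :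
    Real.Gamma ((n : ℝ) - k + 1) = ((n - k).factorial : ℝ) := by
  rw [← Nat.cast_sub hk, Real.Gamma_nat_eq_factorial]

theorem gamma_desc (β : ℝ) (hβ : -1 < β) (n k : ℕ) (hk : k ≤ n) :
    Real.Gamma (n + β + 1) =
      (descPochhammer ℝ k).eval (n + β) * Real.Gamma ((n : ℝ) - k + β + 1) := by
  have hkn : (k : ℝ) ≤ n := by exact_mod_cast hk
  have h := gamma_add_nat ((n : ℝ) - k + β + 1) (by linarith) k
  rw [descPochhammer_eval_eq_ascPochhammer]
  have e1 : (n : ℝ) - k + β + 1 + k = n + β + 1 := by ring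
  have e2 : (n : ℝ) + β - k + 1 = n - k + β + 1 := by ring
  rw [e1] at h
  rw [h, e2]

theorem jR_pos (α : ℝ) (hα : -1 < α) (n : ℕ) : 0 < jR α n := by
  have h1 := gamma_pos' α hα n
  have h2 : 0 < Real.Gamma (α + 1) := Real.Gamma_pos_of_pos (by linarith)
  unfold jR
  positivity

theorem jc_eq (α β : ℝ) (hα : -1 < α) (hβ : -1 < β) (n k : ℕ) (hk : k ≤ n) :
    jc α β n k = jR α n * jb α β n k := by
  have hkn : (k : ℝ) ≤ n := by exact_mod_cast hk
  have h1 := (gamma_pos'' α hα k).ne'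
  have h2 : Real.Gamma (α + 1) ≠ 0 := (Real.Gamma_pos_of_pos (by linarith)).ne'
  have h3 : Real.Gamma ((n : ℝ) - k + β + 1) ≠ 0 := (Real.Gamma_pos_of_pos (by linarith)).ne'
  have h4 : (n.choose k : ℝ) = n.factorial / (k.factorial * (n - k).factorial) :=
    Nat.cast_choose ℝ hk
  unfold jc jR jb
  rw [gamma_sub_fac n k hk, gamma_desc β hβ n k hk, Real.Gamma_nat_eq_factorial, h4]
  have h5 : (n.factorial : ℝ) ≠ 0 := by positivity
  have h6 : (k.factorial : ℝ) ≠ 0 := by positivity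
  have h7 : ((n - k).factorial : ℝ) ≠ 0 := by positivity
  field_simp

theorem desc_nonneg (β : ℝ) (hβ : -1 < β) (n k : ℕ) (hk : k ≤ n) :
    0 ≤ (descPochhammer ℝ k).eval (n + β) := by
  have hkn : (k : ℝ) ≤ n := by exact_mod_cast hk
  exact descPochhammer_nonneg (by linarith)

theorem jb_nonneg (α β : ℝ) (hα : -1 < α) (hβ : -1 < β) (n k : ℕ) (hk : k ≤ n) :
    0 ≤ jb α β n k := by
  have h1 := gamma_pos'' α hα k
  have h2 : 0 < Real.Gamma (α + 1) := Real.Gamma_pos_of_pos (by linarith)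
  have h3 := desc_nonneg β hβ n k hk
  unfold jb
  positivity

theorem jb_mono (α β : ℝ) (hα : -1 < α) (hβ : -1 < β) (i n k : ℕ) (hk : k ≤ i) (hi : i ≤ n) :
    jb α β i k ≤ jb α β n k := by
  have h1 := gamma_pos'' α hα k
  have h2 : 0 < Real.Gamma (α + 1) := Real.Gamma_pos_of_pos (by linarith)
  have h3 := desc_nonneg β hβ i k hk
  have hki : (k : ℝ) ≤ i := by exact_mod_cast hk
  have hin : (i : ℝ) ≤ n := by exact_mod_cast hi
  have h4 : (descPochhammer ℝ k).eval ((i : ℝ) + β) ≤ (descPochhammer ℝ k).eval ((n : ℝ) + β) :=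
    monotoneOn_descPochhammer_eval k (by simp only [Set.mem_Ici]; linarith) (by simp only [Set.mem_Ici]; linarith) (by linarith)
  have h5 : (i.choose k : ℝ) ≤ n.choose k := by exact_mod_cast Nat.choose_le_choose k hi
  unfold jb
  gcongr

/-- Normalised Jacobi value. -/
noncomputable def jp (α β : ℝ) (n : ℕ) (y : ℝ) : ℝ :=
  ∑ k ∈ Finset.range (n + 1), jb α β n k * y ^ k * (1 + y) ^ (n - k)

theorem eval_eq_jp (α β : ℝ) (hα : -1 < α) (hβ : -1 < β) (n : ℕ) (x : ℝ) :
    (jacobiP α β n).eval x = jR α n * jp α β n ((x - 1) / 2) := by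
  rw [jacobiP_eq, eval_finsetSum, jp, Finset.mul_sum]
  refine Finset.sum_congr rfl fun k hk => ?_
  rw [jc_eq α β hα hβ n k (Nat.lt_succ_iff.1 (Finset.mem_range.1 hk))]
  simp only [eval_mul, eval_pow, eval_C, eval_sub, eval_add, eval_one, eval_X]
  have e1 : (2⁻¹ : ℝ) * (x - 1) = (x - 1) / 2 := by ring
  have e2 : (2⁻¹ : ℝ) * (x + 1) = 1 + (x - 1) / 2 := by ring
  rw [e1, e2]
  ring

theorem jp_mono (α β : ℝ) (hα : -1 < α) (hβ : -1 < β) (i n : ℕ) (hi : i ≤ n) (y : ℝ) (hy : 0 ≤ y) :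
    jp α β i y ≤ jp α β n y := by
  unfold jp
  have hsub : Finset.range (i + 1) ⊆ Finset.range (n + 1) :=
    Finset.range_subset_range.2 (by omega)
  refine le_trans (Finset.sum_le_sum fun k hk => ?_)
    (Finset.sum_le_sum_of_subset_of_nonneg hsub fun k hk _ => ?_)
  · have hk' : k ≤ i := Nat.lt_succ_iff.1 (Finset.mem_range.1 hk)
    have h1 := jb_nonneg α β hα hβ n k (hk'.trans hi)
    have h2 := jb_mono α β hα hβ i n k hk' hi
    have h3 : (1 + y) ^ (i - k) ≤ (1 + y) ^ (n - k) := pow_le_pow_right₀ (by linarith) (by omega)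
    gcongr
  · have hk' : k ≤ n := Nat.lt_succ_iff.1 (Finset.mem_range.1 hk)
    have h1 := jb_nonneg α β hα hβ n k hk'
    positivity

theorem jp_pos (α β : ℝ) (hα : -1 < α) (hβ : -1 < β) (n : ℕ) (y : ℝ) (hy : 0 ≤ y) :
    0 < jp α β n y := by
  refine lt_of_lt_of_le ?_ (jp_mono α β hα hβ 0 n (Nat.zero_le _) y hy)
  have h2 : Real.Gamma (α + 1) ≠ 0 := (Real.Gamma_pos_of_pos (by linarith)).ne'
  simp [jp, jb, h2]

theorem jc_symm (α β : ℝ) (n k : ℕ) (hk : k ≤ n) : jc α β n k = jc β α n (n - k) := by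
  unfold jc
  rw [Nat.cast_sub hk]
  have e1 : (n : ℝ) - (n - k) + 1 = k + 1 := by ring
  have e2 : β + ((n : ℝ) - k) + 1 = n - k + β + 1 := by ring
  have e3 : (n : ℝ) - (n - k) + α + 1 = α + k + 1 := by ring
  rw [e1, e2, e3]
  simp only [div_eq_mul_inv, mul_inv]
  ring

theorem jacobiP_symm (α β : ℝ) (n : ℕ) (x : ℝ) :
    (jacobiP α β n).eval x = (-1) ^ n * (jacobiP β α n).eval (-x) := by
  rw [jacobiP_eq, jacobiP_eq, eval_finsetSum, eval_finsetSum, ← Finset.sum_range_reflect,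
    Finset.mul_sum]
  refine Finset.sum_congr rfl fun k hk => ?_
  have hk' : k ≤ n := Nat.lt_succ_iff.1 (Finset.mem_range.1 hk)
  have e0 : n + 1 - 1 - k = n - k := by omega
  rw [e0, jc_symm α β n (n - k) (Nat.sub_le _ _), Nat.sub_sub_self hk']
  simp only [eval_mul, eval_pow, eval_C, eval_sub, eval_add, eval_one, eval_X]
  have e1 : (2⁻¹ : ℝ) * (-x - 1) = (-1) * (2⁻¹ * (x + 1)) := by ring
  have e2 : (2⁻¹ : ℝ) * (-x + 1) = (-1) * (2⁻¹ * (x - 1)) := by ring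
  have e3 : (-1 : ℝ) ^ n = (-1) ^ k * (-1) ^ (n - k) := by
    rw [← pow_add, Nat.add_sub_cancel' hk']
  have e4 : ∀ m : ℕ, (-1 : ℝ) ^ m * (-1) ^ m = 1 := fun m => by rw [← mul_pow]; simp
  rw [e1, e2, e3, mul_pow (-1 : ℝ), mul_pow (-1 : ℝ)]
  linear_combination (-jc β α n k * (2⁻¹ * (x + 1)) ^ k * (2⁻¹ * (x - 1)) ^ (n - k)) *
    ((-1 : ℝ) ^ k * (-1) ^ k * e4 (n - k) + e4 k)

/-- Ratio bound outside the interval. -/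
theorem ratio_right (α β : ℝ) (hα : -1 < α) (hβ : -1 < β) (x : ℝ) (hx : 1 ≤ x) (i n : ℕ)
    (hi : i ≤ n) : |(jacobiP α β i).eval x| ≤ jR α i / jR α n * |(jacobiP α β n).eval x| := by
  have hy : 0 ≤ (x - 1) / 2 := by linarith
  rw [eval_eq_jp α β hα hβ, eval_eq_jp α β hα hβ]
  have p1 := jR_pos α hα i
  have p2 := jR_pos α hα n
  have p3 := jp_pos α β hα hβ i _ hy
  have p4 := jp_pos α β hα hβ n _ hy
  rw [abs_of_pos (by positivity), abs_of_pos (by positivity)]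
  have e : jR α i / jR α n * (jR α n * jp α β n ((x - 1) / 2)) =
    jR α i * jp α β n ((x - 1) / 2) := by field_simp
  rw [e]
  exact mul_le_mul_of_nonneg_left (jp_mono α β hα hβ i n hi _ hy) p1.le

theorem eval_right_pos (α β : ℝ) (hα : -1 < α) (hβ : -1 < β) (x : ℝ) (hx : 1 ≤ x) (n : ℕ) :
    0 < |(jacobiP α β n).eval x| := by
  rw [eval_eq_jp α β hα hβ]
  exact abs_pos.2 (mul_pos (jR_pos α hα n) (jp_pos α β hα hβ n _ (by linarith))).ne'

theorem abs_symm (α β : ℝ) (n : ℕ) (x : ℝ) :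
    |(jacobiP α β n).eval x| = |(jacobiP β α n).eval (-x)| := by
  rw [jacobiP_symm, abs_mul]; simp

theorem jR_bounds (a : ℝ) (ha : -1 < a) : ∃ c C : ℝ, 0 < c ∧ 0 < C ∧ ∀ n : ℕ,
    c * ((n : ℝ) + 1) ^ a ≤ jR a n ∧ jR a n ≤ C * ((n : ℝ) + 1) ^ a := by
  obtain ⟨c, C, hc, hC, h⟩ := gamma_bounds a ha
  have h2 : 0 < Real.Gamma (a + 1) := Real.Gamma_pos_of_pos (by linarith)
  refine ⟨c / Real.Gamma (a + 1), C / Real.Gamma (a + 1), by positivity, by positivity, fun n => ?_⟩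
  have h3 : (0 : ℝ) < n.factorial := by positivity
  obtain ⟨h4, h5⟩ := h n
  unfold jR
  constructor
  · rw [le_div_iff₀ (by positivity)]
    refine le_trans (le_of_eq ?_) h4
    field_simp
  · rw [div_le_iff₀ (by positivity)]
    refine le_trans h5 (le_of_eq ?_)
    field_simp

/-! ### Derivatives at one -/

theorem deriv_at_one (α β : ℝ) (j n : ℕ) :
    (derivative^[j] (jacobiP α β n)).eval 1 = j.factorial * ∑ k ∈ Finset.range (n + 1),
      jc α β n k * (if k ≤ j then ((n - k).choose (j - k) : ℝ) * 2⁻¹ ^ j else 0) := by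
  rw [← factorial_smul_hasseDeriv]
  rw [LinearMap.smul_apply, eval_smul, nsmul_eq_mul, ← taylor_coeff]
  congr 1
  rw [jacobiP_eq, map_sum, finsetSum_coeff]
  refine Finset.sum_congr rfl fun k _ => ?_
  have h : taylor (1 : ℝ) (C (jc α β n k) * (C (2⁻¹ : ℝ) * (X - 1)) ^ k *
      (C (2⁻¹ : ℝ) * (X + 1)) ^ (n - k)) =
      C (jc α β n k) * ((X ^ k * (X + 1) ^ (n - k)).comp (C (2⁻¹ : ℝ) * X)) := by
    rw [taylor_apply]
    simp only [mul_comp, pow_comp, add_comp, sub_comp, X_comp, C_comp, one_comp]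
    have e1 : (X : ℝ[X]) + C 1 - 1 = X := by simp
    have e2 : C (2⁻¹ : ℝ) * (X + C 1 + 1) = C (2⁻¹ : ℝ) * X + 1 := by
      have : C (2⁻¹ : ℝ) * 2 = (1 : ℝ[X]) := by
        rw [← C_ofNat, ← C_mul]; norm_num
      have h2 : (X : ℝ[X]) + C 1 + 1 = X + 2 := by rw [C_1]; ring
      rw [h2, mul_add, this]
    rw [e1, e2]
    ring
  rw [h, coeff_C_mul, comp_C_mul_X_coeff, coeff_X_pow_mul', coeff_X_add_one_pow]
  split_ifs <;> simp

theorem desc_le (β : ℝ) (n k j : ℕ) (hk : k ≤ j) :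
    |(descPochhammer ℝ k).eval ((n : ℝ) + β)| ≤ ((1 + |β| + j) * (n + 1)) ^ k := by
  rw [descPochhammer_eval_eq_prod_range, Finset.abs_prod]
  have hb : (0 : ℝ) ≤ |β| := abs_nonneg _
  refine le_trans (Finset.prod_le_prod (fun _ _ => abs_nonneg _)
    (g := fun _ => (1 + |β| + j) * ((n : ℝ) + 1)) fun l hl => ?_) (by simp)
  have hl' : (l : ℝ) ≤ j := by exact_mod_cast ((Finset.mem_range.1 hl).le.trans hk)
  have hn : (0 : ℝ) ≤ n := n.cast_nonneg
  have hl0 : (0 : ℝ) ≤ l := l.cast_nonneg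
  have h1 := le_abs_self β
  have h2 := neg_abs_le β
  have h3 : 0 ≤ |β| * n := by positivity
  have h4 : 0 ≤ (j : ℝ) * n := by positivity
  rw [abs_le]
  constructor <;> nlinarith

theorem deriv_bound (α β : ℝ) (hα : -1 < α) (hβ : -1 < β) (j : ℕ) : ∃ C : ℝ, 0 < C ∧ ∀ n : ℕ,
    |(derivative^[j] (jacobiP α β n)).eval 1| ≤ C * ((n : ℝ) + 1) ^ (α + 2 * j) := by
  obtain ⟨c, C, hc, hC, hR⟩ := jR_bounds α hα
  have hG : 0 < Real.Gamma (α + 1) := Real.Gamma_pos_of_pos (by linarith)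
  set g : ℕ → ℝ := fun k => Real.Gamma (α + 1) / Real.Gamma (α + k + 1) * (1 + |β| + j) ^ k with hg
  have hg0 : ∀ k, 0 < g k := fun k => by
    have := gamma_pos'' α hα k
    simp only [hg]
    positivity
  refine ⟨j.factorial * (C * ∑ k ∈ Finset.range (j + 1), g k), ?_, fun n => ?_⟩
  · have : 0 < ∑ k ∈ Finset.range (j + 1), g k :=
      Finset.sum_pos (fun k _ => hg0 k) ⟨0, by simp⟩
    positivity
  rw [deriv_at_one, abs_mul, abs_of_nonneg (by positivity : (0 : ℝ) ≤ j.factorial)]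
  have hRn := jR_pos α hα n
  have term : ∀ k ∈ Finset.range (n + 1),
      |jc α β n k * (if k ≤ j then ((n - k).choose (j - k) : ℝ) * 2⁻¹ ^ j else 0)| ≤
      (if k ≤ j then g k else 0) * (jR α n * ((n : ℝ) + 1) ^ (2 * j)) := by
    intro k hk
    have hkn : k ≤ n := Nat.lt_succ_iff.1 (Finset.mem_range.1 hk)
    split_ifs with hkj
    · have hgk := gamma_pos'' α hα k
      rw [jc_eq α β hα hβ n k hkn, abs_mul, abs_mul, abs_of_pos hRn]
      have h1 : |jb α β n k| ≤ g k * ((n : ℝ) + 1) ^ (2 * k) := by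
        unfold jb
        have a1 : (n.choose k : ℝ) ≤ ((n : ℝ) + 1) ^ k := by
          calc (n.choose k : ℝ) ≤ ((n ^ k : ℕ) : ℝ) := by exact_mod_cast Nat.choose_le_pow n k
            _ ≤ _ := by push_cast; gcongr; linarith
        rw [abs_mul, abs_mul, abs_of_nonneg (by positivity : (0 : ℝ) ≤ n.choose k),
          abs_of_pos (by positivity : 0 < Real.Gamma (α + 1) / Real.Gamma (α + k + 1))]
        calc _ ≤ ((n : ℝ) + 1) ^ k * (Real.Gamma (α + 1) / Real.Gamma (α + k + 1)) *
              ((1 + |β| + j) * (n + 1)) ^ k := by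
              have := desc_le β n k j hkj
              gcongr
          _ = _ := by rw [hg, mul_pow, two_mul, pow_add]; ring
      have h2 : |((n - k).choose (j - k) : ℝ) * 2⁻¹ ^ j| ≤ ((n : ℝ) + 1) ^ (j - k) := by
        rw [abs_of_nonneg (by positivity)]
        have b1 : ((n - k).choose (j - k) : ℝ) ≤ ((n : ℝ) + 1) ^ (j - k) := by
          calc ((n - k).choose (j - k) : ℝ) ≤ (((n - k) ^ (j - k) : ℕ) : ℝ) := by
                exact_mod_cast Nat.choose_le_pow (n - k) (j - k)
            _ ≤ (((n + 1) ^ (j - k) : ℕ) : ℝ) := by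
                exact_mod_cast Nat.pow_le_pow_left (by omega) _
            _ = _ := by push_cast; rfl
        have b2 : (2⁻¹ : ℝ) ^ j ≤ 1 := pow_le_one₀ (by norm_num) (by norm_num)
        calc _ ≤ ((n : ℝ) + 1) ^ (j - k) * 1 := by gcongr
          _ = _ := mul_one _
      have h3 : ((n : ℝ) + 1) ^ (2 * k) * ((n : ℝ) + 1) ^ (j - k) ≤ ((n : ℝ) + 1) ^ (2 * j) := by
        rw [← pow_add]
        exact pow_le_pow_right₀ (by linarith [(n.cast_nonneg : (0 : ℝ) ≤ n)]) (by omega)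
      have hgk0 := hg0 k
      calc _ ≤ jR α n * (g k * ((n : ℝ) + 1) ^ (2 * k)) * ((n : ℝ) + 1) ^ (j - k) := by gcongr
        _ = g k * (jR α n * (((n : ℝ) + 1) ^ (2 * k) * ((n : ℝ) + 1) ^ (j - k))) := by ring
        _ ≤ _ := by gcongr
    · simp
  have hsum : ∑ k ∈ Finset.range (n + 1), (if k ≤ j then g k else 0) ≤
      ∑ k ∈ Finset.range (j + 1), g k := by
    rw [← Finset.sum_filter]
    refine Finset.sum_le_sum_of_subset_of_nonneg (fun k hk => ?_) fun k _ _ => (hg0 k).le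
    rw [Finset.mem_filter] at hk
    rw [Finset.mem_range]; omega
  have hsum0 : 0 ≤ ∑ k ∈ Finset.range (j + 1), g k := Finset.sum_nonneg fun k _ => (hg0 k).le
  have hpow : ((n : ℝ) + 1) ^ (α + 2 * j) = ((n : ℝ) + 1) ^ α * ((n : ℝ) + 1) ^ (2 * j) := by
    rw [← Real.rpow_add_natCast (by positivity)]; push_cast; rfl
  calc _ ≤ (j.factorial : ℝ) * ∑ k ∈ Finset.range (n + 1), (if k ≤ j then g k else 0) *
          (jR α n * ((n : ℝ) + 1) ^ (2 * j)) := by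
        gcongr
        exact (Finset.abs_sum_le_sum_abs _ _).trans (Finset.sum_le_sum term)
    _ ≤ (j.factorial : ℝ) * ((∑ k ∈ Finset.range (j + 1), g k) *
          (C * ((n : ℝ) + 1) ^ α * ((n : ℝ) + 1) ^ (2 * j))) := by
        rw [← Finset.sum_mul]
        have := (hR n).2
        gcongr
    _ = _ := by rw [hpow]; ring

/-! ### Norms -/

theorem alt_sum (a : ℝ) (n m : ℕ) (hm : m ≤ n) :
    ∑ k ∈ Finset.range (n + 1), (-1 : ℝ) ^ k * n.choose k * (ascPochhammer ℝ m).eval (a + k + 1) =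
      if m = n then (-1 : ℝ) ^ n * n.factorial else 0 := by
  have h := fwdDiff_iter_eq_sum_shift (1 : ℝ) (ascPochhammer ℝ m).eval n (a + 1)
  have h2 : ∑ k ∈ Finset.range (n + 1), (-1 : ℝ) ^ k * n.choose k *
      (ascPochhammer ℝ m).eval (a + k + 1) =
      (-1) ^ n * (fwdDiff (1 : ℝ))^[n] (ascPochhammer ℝ m).eval (a + 1) := by
    rw [h, Finset.mul_sum]
    refine Finset.sum_congr rfl fun k hk => ?_
    have hkn : k ≤ n := Nat.lt_succ_iff.1 (Finset.mem_range.1 hk)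
    have e : a + 1 + k • (1 : ℝ) = a + k + 1 := by simp; ring
    have e3 : (-1 : ℝ) ^ n = (-1) ^ k * (-1) ^ (n - k) := by
      rw [← pow_add, Nat.add_sub_cancel' hkn]
    have e4 : (-1 : ℝ) ^ (n - k) * (-1) ^ (n - k) = 1 := by rw [← mul_pow]; simp
    rw [e, zsmul_eq_mul, e3]
    push_cast
    linear_combination (-(-1 : ℝ) ^ k * n.choose k * (ascPochhammer ℝ m).eval (a + k + 1)) * e4
  rw [h2]
  split_ifs with hmn
  · subst hmn
    have h3 := congrFun (Polynomial.fwdDiff_iter_degree_eq_factorial (ascPochhammer ℝ m)) (a + 1)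
    rw [ascPochhammer_natDegree, (monic_ascPochhammer ℝ m).leadingCoeff] at h3
    rw [h3]
    simp
  · have h3 := congrFun (Polynomial.fwdDiff_iter_eq_zero_of_degree_lt (P := ascPochhammer ℝ m)
      (n := n) (by rw [ascPochhammer_natDegree]; omega)) (a + 1)
    rw [h3]
    simp

theorem jacL_jacobi (a b : ℝ) (ha : -1 < a) (hb : -1 < b) (n m : ℕ) (hm : m ≤ n) :
    jacL a b ha hb (jacobiP a b n * (1 - X) ^ m) =
      2 ^ (a + b + 1) * 2 ^ m * (Real.Gamma (n + a + 1) * Real.Gamma (n + b + 1) /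
        (n.factorial * Real.Gamma (a + b + m + n + 2))) *
        (if m = n then (-1 : ℝ) ^ n * n.factorial else 0) := by
  rw [← alt_sum a n m hm, jacobiP_eq, Finset.sum_mul, map_sum, Finset.mul_sum]
  refine Finset.sum_congr rfl fun k hk => ?_
  have hkn : k ≤ n := Nat.lt_succ_iff.1 (Finset.mem_range.1 hk)
  have hkn' : (k : ℝ) ≤ n := by exact_mod_cast hkn
  have hpoly : C (jc a b n k) * (C (2⁻¹ : ℝ) * (X - 1)) ^ k * (C (2⁻¹ : ℝ) * (X + 1)) ^ (n - k) *
      (1 - X) ^ m = (jc a b n k * ((-1) ^ k * 2⁻¹ ^ n)) • ((1 - X) ^ (k + m) * (1 + X) ^ (n - k)) := by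
    have e1 : (X : ℝ[X]) - 1 = C (-1) * (1 - X) := by simp
    have e2 : (2⁻¹ : ℝ) ^ n = 2⁻¹ ^ k * 2⁻¹ ^ (n - k) := by
      rw [← pow_add, Nat.add_sub_cancel' hkn]
    rw [e1, e2, smul_eq_C_mul]
    simp only [C_mul, C_pow, mul_pow]
    ring
  rw [hpoly, map_smul, jacL_basis, smul_eq_mul]
  have g1 := gamma_add_nat (a + k + 1) (by linarith [(k.cast_nonneg : (0 : ℝ) ≤ k)]) m
  have e1 : a + ((k + m : ℕ) : ℝ) + 1 = a + k + 1 + m := by push_cast; ring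
  have e2 : b + ((n - k : ℕ) : ℝ) + 1 = n - k + b + 1 := by push_cast [hkn]; ring
  have e3 : a + b + ((k + m : ℕ) : ℝ) + ((n - k : ℕ) : ℝ) + 2 = a + b + m + n + 2 := by
    push_cast [hkn]; ring
  have e4 : k + m + (n - k) = m + n := by omega
  rw [e1, e2, e3, e4, g1]
  unfold jc
  rw [gamma_sub_fac n k hkn, Real.Gamma_nat_eq_factorial, Nat.cast_choose ℝ hkn, pow_add (2 : ℝ)]
  have p1 := (gamma_pos'' a ha k).ne'
  have p2 : Real.Gamma ((n : ℝ) - k + b + 1) ≠ 0 := (Real.Gamma_pos_of_pos (by linarith)).ne'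
  have p3 : Real.Gamma (a + b + m + n + 2) ≠ 0 := (Real.Gamma_pos_of_pos (by
    have : (0 : ℝ) ≤ n := n.cast_nonneg
    have : (0 : ℝ) ≤ m := m.cast_nonneg
    linarith)).ne'
  have h5 : (n.factorial : ℝ) ≠ 0 := by positivity
  have h6 : (k.factorial : ℝ) ≠ 0 := by positivity
  have h7 : ((n - k).factorial : ℝ) ≠ 0 := by positivity
  rw [inv_pow]
  field_simp

theorem desc_smeval (k : ℕ) (r : ℝ) :
    (descPochhammer ℤ k).smeval r = (descPochhammer ℝ k).eval r := by
  rw [← aeval_eq_smeval, aeval_def, eval₂_eq_eval_map, descPochhammer_map]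

theorem sum_jc (a b : ℝ) (ha : -1 < a) (hb : -1 < b) (n : ℕ) :
    ∑ k ∈ Finset.range (n + 1), jc a b n k =
      (ascPochhammer ℝ n).eval (n + a + b + 1) / n.factorial := by
  have h := Ring.descPochhammer_smeval_add (r := (n + b : ℝ)) (s := (n + a : ℝ)) n (Commute.all _ _)
  simp only [desc_smeval] at h
  rw [descPochhammer_eval_eq_ascPochhammer, Finset.Nat.sum_antidiagonal_eq_sum_range_succ_mk] at h
  have e : (n : ℝ) + b + (n + a) - n + 1 = n + a + b + 1 := by ring
  rw [e] at h
  rw [h, Finset.sum_div]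
  refine Finset.sum_congr rfl fun k hk => ?_
  have hkn : k ≤ n := Nat.lt_succ_iff.1 (Finset.mem_range.1 hk)
  have hkn' : (k : ℝ) ≤ n := by exact_mod_cast hkn
  have g1 := gamma_desc a ha n (n - k) (Nat.sub_le _ _)
  have g2 := gamma_desc b hb n k hkn
  have e2 : (n : ℝ) - ((n - k : ℕ) : ℝ) + a + 1 = a + k + 1 := by push_cast [hkn]; ring
  rw [e2] at g1
  unfold jc
  rw [gamma_sub_fac n k hkn, Real.Gamma_nat_eq_factorial, Nat.cast_choose ℝ hkn, g1, g2]
  have p1 := (gamma_pos'' a ha k).ne'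
  have p2 : Real.Gamma ((n : ℝ) - k + b + 1) ≠ 0 := (Real.Gamma_pos_of_pos (by linarith)).ne'
  have h5 : (n.factorial : ℝ) ≠ 0 := by positivity
  have h6 : (k.factorial : ℝ) ≠ 0 := by positivity
  have h7 : ((n - k).factorial : ℝ) ≠ 0 := by positivity
  field_simp

theorem comp_coeff (a b : ℝ) (n : ℕ) : ((jacobiP a b n).comp (1 - X)).natDegree ≤ n ∧
    ((jacobiP a b n).comp (1 - X)).coeff n =
      (-1) ^ n * 2⁻¹ ^ n * ∑ k ∈ Finset.range (n + 1), jc a b n k := by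
  have hterm : ∀ k ∈ Finset.range (n + 1),
      (C (jc a b n k) * (C (2⁻¹ : ℝ) * (X - 1)) ^ k *
        (C (2⁻¹ : ℝ) * (X + 1)) ^ (n - k)).comp (1 - X) =
      C (jc a b n k) * (((X : ℝ[X]) ^ k * (X - C 2) ^ (n - k)) * C ((-1) ^ n * 2⁻¹ ^ n)) := by
    intro k hk
    have hkn : k ≤ n := Nat.lt_succ_iff.1 (Finset.mem_range.1 hk)
    simp only [mul_comp, pow_comp, add_comp, sub_comp, X_comp, C_comp, one_comp]
    have e1 : (1 : ℝ[X]) - X - 1 = C (-1) * X := by simp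
    have e2 : (1 : ℝ[X]) - X + 1 = C (-1) * (X - C 2) := by
      have : (C 2 : ℝ[X]) = 1 + 1 := by rw [← C_1, ← C_add]; norm_num
      rw [this]; simp; ring
    have e3 : ((-1 : ℝ)) ^ n * 2⁻¹ ^ n = ((-1) ^ k * 2⁻¹ ^ k) * ((-1) ^ (n - k) * 2⁻¹ ^ (n - k)) := by
      rw [← mul_pow, ← mul_pow, ← mul_pow, ← pow_add, Nat.add_sub_cancel' hkn]
    rw [e1, e2, e3]
    simp only [C_mul, C_pow, mul_pow]
    ring
  have hmon : ∀ k ∈ Finset.range (n + 1),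
      ((X : ℝ[X]) ^ k * (X - C 2) ^ (n - k)).Monic ∧
      ((X : ℝ[X]) ^ k * (X - C 2) ^ (n - k)).natDegree = n := by
    intro k hk
    have hkn : k ≤ n := Nat.lt_succ_iff.1 (Finset.mem_range.1 hk)
    have m1 : ((X : ℝ[X]) ^ k).Monic := monic_X_pow k
    have m2 : (((X : ℝ[X]) - C 2) ^ (n - k)).Monic := (monic_X_sub_C 2).pow _
    refine ⟨m1.mul m2, ?_⟩
    rw [m1.natDegree_mul m2, (monic_X_sub_C 2).natDegree_pow, natDegree_X_sub_C, natDegree_X_pow]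
    omega
  rw [jacobiP_eq, sum_comp, Finset.sum_congr rfl hterm]
  constructor
  · refine natDegree_sum_le_of_forall_le _ _ fun k hk => ?_
    refine (natDegree_C_mul_le _ _).trans ((natDegree_mul_C_le _ _).trans (hmon k hk).2.le)
  · rw [finsetSum_coeff, Finset.mul_sum]
    refine Finset.sum_congr rfl fun k hk => ?_
    rw [coeff_C_mul, coeff_mul_C]
    have h1 := (hmon k hk).1
    rw [Monic, leadingCoeff, (hmon k hk).2] at h1
    rw [h1]
    ring

theorem normSq_eq (a b : ℝ) (ha : -1 < a) (hb : -1 < b) (n : ℕ) :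
    jacobiNormSq a b n = 2 ^ (a + b + 1) * (Real.Gamma (n + a + 1) * Real.Gamma (n + b + 1) *
      (ascPochhammer ℝ n).eval (n + a + b + 1) /
        (n.factorial * Real.Gamma (2 * n + a + b + 2))) := by
  have h0 : jacobiNormSq a b n = jacL a b ha hb (jacobiP a b n * jacobiP a b n) := by
    change _ = ∫ x in (-1 : ℝ)..1, _
    unfold jacobiNormSq
    refine intervalIntegral.integral_congr fun x _ => ?_
    simp only [eval_mul]
    ring
  obtain ⟨hd, hc⟩ := comp_coeff a b n
  set q := (jacobiP a b n).comp (1 - X) with hq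
  have h1 : jacobiP a b n = ∑ m ∈ Finset.range (n + 1), C (q.coeff m) * (1 - X) ^ m := by
    have e1 : jacobiP a b n = q.comp (1 - X) := by
      rw [hq, comp_assoc]; simp
    have e2 := q.as_sum_range_C_mul_X_pow' (Nat.lt_succ_of_le hd)
    conv_lhs => rw [e1, e2, sum_comp]
    simp
  have h2 : jacobiP a b n * jacobiP a b n =
      ∑ m ∈ Finset.range (n + 1), q.coeff m • (jacobiP a b n * (1 - X) ^ m) := by
    refine (congrArg (fun p => jacobiP a b n * p) h1).trans ?_
    simp only [Finset.mul_sum]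
    refine Finset.sum_congr rfl fun m _ => ?_
    rw [smul_eq_C_mul]; ring
  rw [h0, h2, map_sum, Finset.sum_range_succ, Finset.sum_eq_zero, zero_add, map_smul,
    jacL_jacobi a b ha hb n n le_rfl, hc, sum_jc a b ha hb, if_pos rfl, smul_eq_mul]
  · have e : a + b + n + n + 2 = 2 * n + a + b + 2 := by ring
    have e4 : (-1 : ℝ) ^ n * (-1) ^ n = 1 := by rw [← mul_pow]; simp
    have h5 : (n.factorial : ℝ) ≠ 0 := by positivity
    have p3 : Real.Gamma (2 * n + a + b + 2) ≠ 0 := (Real.Gamma_pos_of_pos (by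
      have : (0 : ℝ) ≤ n := n.cast_nonneg
      linarith)).ne'
    rw [e, inv_pow]
    field_simp
    rw [sq, e4, one_mul]
  · intro m hm
    have hm' := Finset.mem_range.1 hm
    rw [map_smul, jacL_jacobi a b ha hb n m hm'.le, if_neg hm'.ne]
    simp

theorem normSq_bound (a b : ℝ) (ha : -1 < a) (hb : -1 < b) : ∃ c : ℝ, 0 < c ∧ ∀ n : ℕ,
    c / ((n : ℝ) + 1) ≤ jacobiNormSq a b n := by
  obtain ⟨ca, _, hca, -, hA⟩ := gamma_bounds a ha
  obtain ⟨cb, _, hcb, -, hB⟩ := gamma_bounds b hb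
  obtain ⟨_, Cs, -, hCs, hS⟩ := gamma_bounds (a + b + 1) (by linarith)
  have hz : 0 < jacobiNormSq a b 0 := by
    rw [normSq_eq a b ha hb]
    have p1 := gamma_pos' a ha 0
    have p2 := gamma_pos' b hb 0
    have p3 : 0 < Real.Gamma (2 * ((0 : ℕ) : ℝ) + a + b + 2) :=
      Real.Gamma_pos_of_pos (by push_cast; linarith)
    rw [ascPochhammer_zero, eval_one]
    positivity
  obtain ⟨d, hd, hdn⟩ : ∃ d : ℝ, 0 < d ∧ ∀ n : ℝ, 1 ≤ n →
      d * (2 * n + (a + b + 1)) ≤ n + (a + b + 1) := by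
    rcases le_or_gt 0 (a + b + 1) with hs | hs
    · exact ⟨1 / 2, by norm_num, fun n hn => by linarith⟩
    · refine ⟨(a + b + 2) / 2, by linarith, fun n hn => ?_⟩
      nlinarith [mul_nonneg (neg_nonneg.2 hs.le) (sub_nonneg.2 hn), mul_pos (neg_pos.2 hs) (by linarith : 0 < a + b + 2)]
  set c1 : ℝ := 2 ^ (a + b + 1) * (ca * cb / Cs * d) with hc1
  have hc1p : 0 < c1 := by positivity
  refine ⟨min c1 (jacobiNormSq a b 0), lt_min hc1p hz, fun n => ?_⟩
  rcases Nat.eq_zero_or_pos n with rfl | hn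
  · simp
  have hn1 : (1 : ℝ) ≤ n := by exact_mod_cast hn
  refine le_trans (b := c1 / ((n : ℝ) + 1)) (by gcongr; exact min_le_left _ _) ?_
  have hx : 0 < (n : ℝ) + a + b + 1 := by linarith
  have g1 := gamma_add_nat ((n : ℝ) + a + b + 1) hx n
  have g2 : Real.Gamma ((n : ℝ) + (a + b + 1) + 1) = (n + a + b + 1) * Real.Gamma (n + a + b + 1) := by
    rw [← Real.Gamma_add_one hx.ne']; congr 1; ring
  have g3 : Real.Gamma (2 * n + a + b + 2) = (2 * n + a + b + 1) * Real.Gamma ((n : ℝ) + a + b + 1 + n) := by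
    rw [show (n : ℝ) + a + b + 1 + n = 2 * n + a + b + 1 by ring,
      ← Real.Gamma_add_one (by linarith)]; congr 1; ring
  have pg := Real.Gamma_pos_of_pos hx
  have pasc := ascPochhammer_pos n ((n : ℝ) + a + b + 1) hx
  have p2 : 0 < 2 * (n : ℝ) + a + b + 1 := by linarith
  have hS2 := (hS n).2
  have hA1 := (hA n).1
  have hB1 := (hB n).1
  have psg : 0 < Real.Gamma ((n : ℝ) + (a + b + 1) + 1) := by rw [g2]; positivity
  have h5 : (0 : ℝ) < n.factorial := by positivity
  have hform : jacobiNormSq a b n = 2 ^ (a + b + 1) * (Real.Gamma (n + a + 1) *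
      Real.Gamma (n + b + 1) * ((n + a + b + 1) / (2 * n + a + b + 1)) /
        (n.factorial * Real.Gamma ((n : ℝ) + (a + b + 1) + 1))) := by
    rw [normSq_eq a b ha hb, g3, g1, g2]
    field_simp
  rw [hform]
  have hdd : d ≤ (n + a + b + 1) / (2 * n + a + b + 1) := by
    rw [le_div_iff₀ p2]
    have := hdn n hn1
    linarith
  have pa := gamma_pos' a ha n
  have pb := gamma_pos' b hb n
  calc c1 / ((n : ℝ) + 1) = 2 ^ (a + b + 1) * ((ca * (((n : ℝ) + 1) ^ a * n.factorial)) *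
        (cb * (((n : ℝ) + 1) ^ b * n.factorial)) * d /
        (n.factorial * (Cs * (((n : ℝ) + 1) ^ (a + b + 1) * n.factorial)))) := by
        rw [hc1, Real.rpow_add_one (by positivity : (n : ℝ) + 1 ≠ 0),
          Real.rpow_add (by positivity : (0 : ℝ) < n + 1)]
        field_simp
    _ ≤ _ := by gcongr

/-! ### Final estimate -/

theorem normSq_pos (a b : ℝ) (ha : -1 < a) (hb : -1 < b) (n : ℕ) : 0 < jacobiNormSq a b n := by
  obtain ⟨c, hc, h⟩ := normSq_bound a b ha hb
  exact lt_of_lt_of_le (by positivity) (h n)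

theorem kern_bound (α β : ℝ) (hα : -1 < α) (hβ : -1 < β) (j : ℕ) (hj : 1 ≤ j) (ρ : ℝ)
    (hρ : -1 < ρ) : ∃ K : ℝ, 0 < K ∧ ∀ n : ℕ, 1 ≤ n → ∀ x : ℝ,
      (∀ i, i ≤ n → |(jacobiP α β i).eval x| ≤ jR ρ i / jR ρ n * |(jacobiP α β n).eval x|) →
      |(kernKPoly α β j (n - 1)).eval x| ≤
        K * ((n : ℝ) + 1) ^ (α + 2 * j + 2) * |(jacobiP α β n).eval x| := by
  obtain ⟨c, hc, hN⟩ := normSq_bound α β hα hβ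
  obtain ⟨D, hD, hDn⟩ := deriv_bound α β hα hβ j
  obtain ⟨r, R, hr, hR, hRn⟩ := jR_bounds ρ hρ
  refine ⟨D / c * (R / r), by positivity, fun n hn x hx => ?_⟩
  have hj1 : (1 : ℝ) ≤ j := by exact_mod_cast hj
  have hnp : (0 : ℝ) < (n : ℝ) + 1 := by positivity
  unfold kernKPoly
  rw [eval_finsetSum, Nat.sub_add_cancel hn]
  set A := |(jacobiP α β n).eval x| with hA
  have hA0 : 0 ≤ A := abs_nonneg _
  have term : ∀ i ∈ Finset.range n,
      |(C ((derivative^[j] (jacobiP α β i)).eval 1 / jacobiNormSq α β i) *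
        jacobiP α β i).eval x| ≤ D / c * (R / r) * ((n : ℝ) + 1) ^ (α + 2 * j + 1) * A := by
    intro i hi
    have hin : i ≤ n := (Finset.mem_range.1 hi).le
    have hin' : (i : ℝ) ≤ n := by exact_mod_cast hin
    have hip : (0 : ℝ) < (i : ℝ) + 1 := by positivity
    have hNi := normSq_pos α β hα hβ i
    rw [eval_mul, eval_C, abs_mul, abs_div, abs_of_pos hNi]
    have h1 : |(derivative^[j] (jacobiP α β i)).eval 1| / jacobiNormSq α β i ≤
        D * ((i : ℝ) + 1) ^ (α + 2 * j) / (c / ((i : ℝ) + 1)) := by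
      have := hDn i
      have := hN i
      gcongr
    have h2 : jR ρ i / jR ρ n ≤ (R * ((i : ℝ) + 1) ^ ρ) / (r * ((n : ℝ) + 1) ^ ρ) := by
      have := (hRn i).2
      have := (hRn n).1
      gcongr
    have h3 : ((i : ℝ) + 1) ^ (α + 2 * j + 1 + ρ) ≤ ((n : ℝ) + 1) ^ (α + 2 * j + 1 + ρ) :=
      Real.rpow_le_rpow hip.le (by linarith) (by linarith)
    have e1 : ((i : ℝ) + 1) ^ (α + 2 * j + 1 + ρ) =
        ((i : ℝ) + 1) ^ (α + 2 * j) * ((i : ℝ) + 1) * ((i : ℝ) + 1) ^ ρ := by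
      rw [Real.rpow_add hip, Real.rpow_add_one hip.ne']
    have e2 : ((n : ℝ) + 1) ^ (α + 2 * j + 1 + ρ) =
        ((n : ℝ) + 1) ^ (α + 2 * j + 1) * ((n : ℝ) + 1) ^ ρ := Real.rpow_add hnp _ _
    rw [e1, e2] at h3
    have hnr : 0 < ((n : ℝ) + 1) ^ ρ := by positivity
    calc _ ≤ D * ((i : ℝ) + 1) ^ (α + 2 * j) / (c / ((i : ℝ) + 1)) *
          ((R * ((i : ℝ) + 1) ^ ρ) / (r * ((n : ℝ) + 1) ^ ρ) * A) := by
          refine mul_le_mul h1 ((hx i hin).trans ?_) (abs_nonneg _) (by positivity)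
          gcongr
      _ = D / c * (R / r) * ((((i : ℝ) + 1) ^ (α + 2 * j) * ((i : ℝ) + 1) * ((i : ℝ) + 1) ^ ρ) /
          ((n : ℝ) + 1) ^ ρ) * A := by field_simp
      _ ≤ D / c * (R / r) * (((n : ℝ) + 1) ^ (α + 2 * j + 1)) * A := by
          have : (((i : ℝ) + 1) ^ (α + 2 * j) * ((i : ℝ) + 1) * ((i : ℝ) + 1) ^ ρ) /
            ((n : ℝ) + 1) ^ ρ ≤ ((n : ℝ) + 1) ^ (α + 2 * j + 1) := by
            rwa [div_le_iff₀ hnr]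
          gcongr
  refine (Finset.abs_sum_le_sum_abs _ _).trans ((Finset.sum_le_sum term).trans ?_)
  rw [Finset.sum_const, Finset.card_range, nsmul_eq_mul]
  have e3 : ((n : ℝ) + 1) ^ (α + 2 * j + 2) = ((n : ℝ) + 1) ^ (α + 2 * j + 1) * (n + 1) := by
    rw [← Real.rpow_add_one hnp.ne']; congr 1; ring
  rw [e3]
  have hpos : 0 ≤ D / c * (R / r) * ((n : ℝ) + 1) ^ (α + 2 * j + 1) * A := by positivity
  nlinarith

theorem mass_small (γ M p : ℝ) (Ms : ℕ → ℝ) (hp : 0 < p)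
    (hlim : Tendsto (fun n : ℕ => Ms n * (n : ℝ) ^ γ) atTop (nhds M)) (hγ : p < γ)
    (hMs : ∀ n, 0 ≤ Ms n) :
    Tendsto (fun n : ℕ => Ms n * ((n : ℝ) + 1) ^ p) atTop (nhds 0) := by
  have h1 : Tendsto (fun n : ℕ => (n : ℝ) ^ (-(γ - p))) atTop (nhds 0) :=
    (tendsto_rpow_neg_atTop (by linarith)).comp tendsto_natCast_atTop_atTop
  have h2 := (hlim.mul h1).const_mul ((2 : ℝ) ^ p)
  simp only [mul_zero] at h2
  refine tendsto_of_tendsto_of_tendsto_of_le_of_le' tendsto_const_nhds h2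
    (Eventually.of_forall fun n => by have := hMs n; positivity) ?_
  filter_upwards [eventually_ge_atTop 1] with n hn
  have hn1 : (1 : ℝ) ≤ n := by exact_mod_cast hn
  have hn0 : (0 : ℝ) < n := by linarith
  have h3 : ((n : ℝ) + 1) ^ p ≤ 2 ^ p * (n : ℝ) ^ p := by
    rw [← Real.mul_rpow (by norm_num) hn0.le]
    exact Real.rpow_le_rpow (by positivity) (by linarith) hp.le
  have h4 : (n : ℝ) ^ p = (n : ℝ) ^ γ * (n : ℝ) ^ (-(γ - p)) := by
    rw [← Real.rpow_add hn0]; congr 1; ring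
  have hm := hMs n
  calc Ms n * ((n : ℝ) + 1) ^ p ≤ Ms n * (2 ^ p * (n : ℝ) ^ p) := by gcongr
    _ = _ := by rw [h4]; ring

/-- for `γ > 2(α+2j+1)` and `n` large, all real zeros of `Q_n`
lie in `(-1,1)`. -/
theorem sobQ_zeros_inside (α β : ℝ) (hα : -1 < α) (hβ : -1 < β) (j : ℕ) (hj : 1 ≤ j)
    (γ M : ℝ) (hM : 0 < M) (Ms : ℕ → ℝ) (hMs : ∀ n, 0 ≤ Ms n)
    (hlim : Filter.Tendsto (fun n : ℕ => Ms n * (n : ℝ) ^ γ) Filter.atTop (nhds M))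
    (hγ : 2 * (α + 2 * j + 1) < γ) :
    ∃ N : ℕ, ∀ n, N ≤ n → ∀ x : ℝ, (sobQ α β j Ms n).eval x = 0 → -1 < x ∧ x < 1 := by
  have hj1 : (1 : ℝ) ≤ j := by exact_mod_cast hj
  obtain ⟨D, hD, hDn⟩ := deriv_bound α β hα hβ j
  obtain ⟨K1, hK1, hk1⟩ := kern_bound α β hα hβ j hj α hα
  obtain ⟨K2, hK2, hk2⟩ := kern_bound α β hα hβ j hj β hβ
  have hsm := (mass_small γ M _ Ms (by linarith) hlim hγ hMs).const_mul (D * (K1 + K2))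
  rw [mul_zero] at hsm
  obtain ⟨N, hN⟩ := eventually_atTop.1 (hsm.eventually_lt_const one_pos)
  refine ⟨max N 1, fun n hn x hx => ?_⟩
  have hn1 : 1 ≤ n := (le_max_right _ _).trans hn
  have hsmall := hN n ((le_max_left _ _).trans hn)
  have hnp : (0 : ℝ) < (n : ℝ) + 1 := by positivity
  have hM0 := hMs n
  -- the core contradiction
  have core : 0 < |(jacobiP α β n).eval x| → ¬ (|(kernKPoly α β j (n - 1)).eval x| ≤
        (K1 + K2) * ((n : ℝ) + 1) ^ (α + 2 * j + 2) * |(jacobiP α β n).eval x|) := by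
    intro hpos hk
    have hKK : 0 ≤ kernK α β j j (n - 1) 1 1 := by
      unfold kernK
      refine Finset.sum_nonneg fun i _ => ?_
      exact div_nonneg (mul_self_nonneg _) (normSq_pos α β hα hβ i).le
    have hx2 : (jacobiP α β n).eval x = Ms n * (derivative^[j] (jacobiP α β n)).eval 1 /
        (1 + Ms n * kernK α β j j (n - 1) 1 1) * (kernKPoly α β j (n - 1)).eval x := by
      unfold sobQ at hx
      rw [eval_sub, eval_mul, eval_C] at hx
      linarith
    have hden : 1 ≤ 1 + Ms n * kernK α β j j (n - 1) 1 1 := by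
      have : 0 ≤ Ms n * kernK α β j j (n - 1) 1 1 := by positivity
      linarith
    have hc : |Ms n * (derivative^[j] (jacobiP α β n)).eval 1 /
        (1 + Ms n * kernK α β j j (n - 1) 1 1)| ≤ Ms n * (D * ((n : ℝ) + 1) ^ (α + 2 * j)) := by
      rw [abs_div, abs_mul, abs_of_nonneg hM0,
        abs_of_pos (by linarith : 0 < 1 + Ms n * kernK α β j j (n - 1) 1 1)]
      refine (div_le_self (by positivity) hden).trans ?_
      have := hDn n
      gcongr
    have h1 : |(jacobiP α β n).eval x| ≤ Ms n * (D * ((n : ℝ) + 1) ^ (α + 2 * j)) *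
        ((K1 + K2) * ((n : ℝ) + 1) ^ (α + 2 * j + 2) * |(jacobiP α β n).eval x|) := by
      conv_lhs => rw [hx2, abs_mul]
      exact mul_le_mul hc hk (abs_nonneg _) (by positivity)
    have e : ((n : ℝ) + 1) ^ (2 * (α + 2 * j + 1)) =
        ((n : ℝ) + 1) ^ (α + 2 * j) * ((n : ℝ) + 1) ^ (α + 2 * j + 2) := by
      rw [← Real.rpow_add hnp]; congr 1; ring
    rw [e] at hsmall
    have h2 := mul_lt_mul_of_pos_right hsmall hpos
    linarith
  constructor
  · by_contra hcon
    have hx1 : 1 ≤ -x := by linarith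
    refine core (by rw [abs_symm]; exact eval_right_pos β α hβ hα _ hx1 n) ?_
    refine (hk2 n hn1 x fun i hi => ?_).trans ?_
    · rw [abs_symm α β i, abs_symm α β n]
      exact ratio_right β α hβ hα _ hx1 i n hi
    · gcongr
      linarith
  · by_contra hcon
    have hx1 : 1 ≤ x := by linarith
    refine core (eval_right_pos α β hα hβ _ hx1 n) ?_
    refine (hk1 n hn1 x fun i hi => ratio_right α β hα hβ _ hx1 i n hi).trans ?_
    gcongr
    linarith
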